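/- For every irrational α ∈ ℝ/ℤ and every f ∈ F¹_α, the C¹-conjugacy class C¹(f) = {h∘f∘h⁻¹ : h a C¹-diffeomorphism of S¹} is dense in F¹_α for the C¹ topology; that is, for every g ∈ F¹_α and every ε > 0 there exists a C¹-diffeomorphism h of S¹ such that the C¹ distance between h∘f∘h⁻¹ and g is less than ε. -/

import Mathlib

open Set Filter

/-- `inArc a w b` : the point `w` (mod 1) lies strictly inside the positively oriented
open arc of the circle `ℝ/ℤ` from `a` (mod 1) to `b` (mod 1). -/
def inArc (a w b : ℝ) : Prop :=
  0 < Int.fract (w - a) ∧ Int.fract (w - a) < Int.fract (b - a)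

/-- A lift of an orientation-preserving `C¹`-diffeomorphism of the circle `S¹ = ℝ/ℤ`:
a `C¹` map `F : ℝ → ℝ` with `F (x+1) = F x + 1` and `F' > 0` everywhere. -/
structure CircleDiffeo where
  toFun : ℝ → ℝ
  contDiff : ContDiff ℝ 1 toFun
  deriv_pos : ∀ x : ℝ, 0 < deriv toFun x
  commute_translation : ∀ x : ℝ, toFun (x + 1) = toFun x + 1

/-- `f` has rotation number (a lift of) `α`. -/
def hasRotationNumber (f : CircleDiffeo) (α : ℝ) : Prop :=
  Tendsto (fun n : ℕ => f.toFun^[n] 0 / (n : ℝ)) atTop (nhds α)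

/-- The `C¹`-distance between (lifts of) circle maps : sup distance between the maps
plus sup distance between the derivatives (computed over a fundamental domain). -/
noncomputable def distC1 (f g : ℝ → ℝ) : ℝ :=
  (⨆ x : Icc (0:ℝ) 1, |f x.1 - g x.1|) + (⨆ x : Icc (0:ℝ) 1, |deriv f x.1 - deriv g x.1|)

/-!
Conjugacy is used in two opposite directions, with the rigid translation `R` by `α` as a pivot.

*Conjugates of `f` accumulate on `R`.* Let `H` semiconjugate `f` to `R`. Intervals whose `H`-length
is small have many iterates that are disjoint modulo `1`, so the Birkhoff sums of `log f'` vary by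
`o(n)`; as they vanish somewhere, `log f'` has uniformly small Birkhoff averages. It is therefore
almost a coboundary, and integrating the exponential of the transfer function gives a conjugacy `k`
for which `k ∘ f ∘ k⁻¹` has derivative close to `1`.

*Conjugates of `R` accumulate on `g`.* Averaging `g` over short intervals and translating to restore
the rotation number gives a nearby `G` with `log G'` Lipschitz. By Denjoy's distortion argument `G`
is conjugate to `R` by a homeomorphism `h₀`, and averaging `h₀` over short intervals gives a
diffeomorphism `h` such that `h ∘ R ∘ h⁻¹` is `C¹`-close to `G`.

Conjugation by the fixed diffeomorphism `h` is `C¹`-continuous, so `(h ∘ k) ∘ f ∘ (h ∘ k)⁻¹` is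
`C¹`-close to `g` once `k` is chosen well enough depending on `h`.
-/

section PeriodicFunctions

theorem uniformContinuous_of_periodic {E : Type*} [UniformSpace E] {φ : ℝ → E} {c : ℝ}
    (hper : Function.Periodic φ c) (hc : 0 < c) (hφ : Continuous φ) : UniformContinuous φ := by
  have : Fact (0 < c) := ⟨hc⟩
  have hlift : Continuous (hper.lift : AddCircle c → E) := continuous_coinduced_dom.2 hφ
  exact (CompactSpace.uniformContinuous_of_continuous hlift).comp
    (uniformContinuous_addMonoidHom_of_continuous (f := QuotientAddGroup.mk' _)
      (AddCircle.continuous_mk' c))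

theorem exists_dist_le_add_mul_dist {X Y : Type*} [PseudoMetricSpace X] [PseudoMetricSpace Y]
    {φ : X → Y} (hφ : UniformContinuous φ) (hbdd : Bornology.IsBounded (range φ))
    {ε : ℝ} (hε : 0 < ε) :
    ∃ K, 0 ≤ K ∧ ∀ x y, dist (φ x) (φ y) ≤ ε + K * dist x y := by
  obtain ⟨δ, hδ, hclose⟩ := Metric.uniformContinuous_iff.1 hφ ε hε
  refine ⟨Metric.diam (range φ) / δ, by positivity, fun x y => ?_⟩
  rcases lt_or_ge (dist x y) δ with hxy | hxy
  · exact (hclose hxy).le.trans (le_add_of_nonneg_right (by positivity))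
  · calc dist (φ x) (φ y) ≤ Metric.diam (range φ) :=
          Metric.dist_le_diam_of_mem hbdd (mem_range_self x) (mem_range_self y)
      _ = Metric.diam (range φ) / δ * δ := (div_mul_cancel₀ _ hδ.ne').symm
      _ ≤ ε + Metric.diam (range φ) / δ * dist x y := by
          have : Metric.diam (range φ) / δ * δ ≤ Metric.diam (range φ) / δ * dist x y := by gcongr
          linarith

theorem uniformContinuous_circleDeg1Lift (F : CircleDeg1Lift) (hF : Continuous F) :
    UniformContinuous F := by
  have hper : Function.Periodic (fun x => F x - x) 1 := fun x => by
    simp only [F.map_add_one, add_sub_add_right_eq_sub]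
  simpa using (uniformContinuous_of_periodic hper one_pos (hF.sub continuous_id)).add
    uniformContinuous_id

theorem exists_lipschitzWith_of_periodic_deriv {u u' : ℝ → ℝ} {c : ℝ}
    (hu : ∀ x, HasDerivAt u (u' x) x) (hcont : Continuous u') (hper : Function.Periodic u' c)
    (hc : c ≠ 0) : ∃ L : NNReal, LipschitzWith L u := by
  obtain ⟨C, hC⟩ := (hper.isBounded_of_continuous hc hcont).exists_norm_le
  refine ⟨C.toNNReal, lipschitzWith_of_nnnorm_deriv_le (fun x => (hu x).differentiableAt)
    fun x => ?_⟩
  rw [(hu x).deriv, ← NNReal.coe_le_coe, coe_nnnorm]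
  exact (hC _ (mem_range_self x)).trans C.le_coe_toNNReal

end PeriodicFunctions

section Orbits

variable {G : Type*} [NormedAddCommGroup G] {a : G}

theorem exists_pos_le_norm_nsmul (ha : ¬IsOfFinAddOrder a) (N : ℕ) :
    ∃ δ > 0, ∀ m, 0 < m → m ≤ N → δ ≤ ‖m • a‖ := by
  induction N with
  | zero => exact ⟨1, one_pos, fun m hm hm0 => absurd hm hm0.not_gt⟩
  | succ N ih =>
    obtain ⟨δ, hδ, hle⟩ := ih
    have hpos : 0 < ‖(N + 1) • a‖ :=
      norm_pos_iff.2 fun h => ha (isOfFinAddOrder_iff_nsmul_eq_zero.2 ⟨N + 1, N.succ_pos, h⟩)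
    refine ⟨min δ ‖(N + 1) • a‖, lt_min hδ hpos, fun m hm hmN => ?_⟩
    rcases Nat.le_succ_iff.1 hmN with hmN | rfl
    · exact (min_le_left _ _).trans (hle m hm hmN)
    · exact min_le_right _ _

variable [CompactSpace G]

theorem frequently_norm_nsmul_lt (ha : ¬IsOfFinAddOrder a) :
    ∃ᶠ n in atTop, ∀ m, 0 < m → m < n → ‖n • a‖ < ‖m • a‖ := by
  classical
  refine frequently_atTop'.2 fun N => ?_
  obtain ⟨δ, hδ, hle⟩ := exists_pos_le_norm_nsmul ha N
  have hreturn : ∃ n, 0 < n ∧ ‖n • a‖ < δ := by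
    have hrec := (mapClusterPt_zero_atTop_nsmul a).frequently (Metric.ball_mem_nhds 0 hδ)
    obtain ⟨n, hn, hnδ⟩ := frequently_atTop'.1 hrec 0
    exact ⟨n, hn, mem_ball_zero_iff.1 hnδ⟩
  obtain ⟨hn, hnδ⟩ := Nat.find_spec hreturn
  refine ⟨Nat.find hreturn, not_le.1 fun hnN => (hle _ hn hnN).not_gt hnδ, fun m hm hmn => ?_⟩
  exact hnδ.trans_le (not_lt.1 fun hmδ => Nat.find_min hreturn hmn ⟨hm, hmδ⟩)

theorem exists_forall_exists_dist_nsmul_lt (ha : DenseRange fun n : ℤ => n • a) {ε : ℝ}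
    (hε : 0 < ε) : ∃ N : ℕ, ∀ t, ∃ j ≤ N, dist (j • a) t < ε := by
  have hdense : DenseRange fun n : ℕ => n • a := denseRange_zsmul_iff_nsmul.1 ha
  obtain ⟨s, hs⟩ := isCompact_univ.elim_finite_subcover (fun j : ℕ => Metric.ball (j • a) ε)
    (fun _ => Metric.isOpen_ball) fun t _ => by
      obtain ⟨j, hj⟩ := hdense.exists_dist_lt t hε
      exact mem_iUnion.2 ⟨j, hj⟩
  refine ⟨s.sup id, fun t => ?_⟩
  obtain ⟨j, hjs, hj⟩ := mem_iUnion₂.1 (hs (mem_univ t))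
  exact ⟨j, Finset.le_sup (f := id) hjs, by rwa [dist_comm]⟩

end Orbits

section IrrationalRotation

theorem not_isOfFinAddOrder_coe {α : ℝ} (hα : Irrational α) :
    ¬IsOfFinAddOrder (α : UnitAddCircle) := by
  rw [AddCircle.isOfFinAddOrder_iff_exists_rat_eq_div]
  rintro ⟨q, hq⟩
  exact hα ⟨q, by simpa using hq⟩

theorem denseRange_zsmul_coe {α : ℝ} (hα : Irrational α) :
    DenseRange fun n : ℤ => n • (α : UnitAddCircle) :=
  AddCircle.denseRange_zsmul_coe_iff.2 (by rwa [div_one])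

theorem norm_coe_le_abs_sub_intCast (x : ℝ) (k : ℤ) : ‖(x : UnitAddCircle)‖ ≤ |x - k| := by
  rw [UnitAddCircle.norm_eq]
  exact round_le x k

theorem exists_eq_add_intCast_of_coe_eq {x y : ℝ} (hxy : (x : UnitAddCircle) = y) :
    ∃ k : ℤ, y = x + k := by
  have hsub : ((y - x : ℝ) : UnitAddCircle) = 0 := by rw [AddCircle.coe_sub, hxy, sub_self]
  obtain ⟨k, hk⟩ := (AddCircle.coe_eq_zero_iff 1).1 hsub
  exact ⟨k, by simpa [sub_eq_iff_eq_add'] using hk.symm⟩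

end IrrationalRotation

section DisjointIterates

open MeasureTheory

theorem volume_le_of_injOn_coe {T : ℝ} (hT : 0 < T) {s : Set ℝ} (hs : MeasurableSet s)
    (hinj : InjOn ((↑) : ℝ → AddCircle T) s) : volume s ≤ ENNReal.ofReal T := by
  by_contra! hlarge
  have hvol : volume (Ioc 0 (0 + T)) < volume s := by rwa [Real.volume_Ioc, add_sub_cancel_left]
  obtain ⟨p, q, hpq, hmeet⟩ := exists_pair_mem_lattice_not_disjoint_vadd
    (isAddFundamentalDomain_Ioc hT 0) hs.nullMeasurableSet hvol
  obtain ⟨_, ⟨u, hu, rfl⟩, v, hv, huv : (q : ℝ) + v = p + u⟩ := not_disjoint_iff.1 hmeet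
  have hcoe : (u : AddCircle T) = v := by
    refine (QuotientAddGroup.eq_iff_sub_mem).2 ?_
    rw [show u - v = q - p by linarith]
    exact sub_mem q.2 p.2
  obtain rfl := hinj hu hv hcoe
  exact hpq (Subtype.ext (add_right_cancel huv.symm))

theorem sum_sub_le_of_injOn_coe {ι : Type*} {I : Finset ι} {u v : ι → ℝ} {T : ℝ} (hT : 0 < T)
    (huv : ∀ i ∈ I, u i ≤ v i) (hdisj : (I : Set ι).PairwiseDisjoint fun i => Ioo (u i) (v i))
    (hinj : InjOn ((↑) : ℝ → AddCircle T) (⋃ i ∈ I, Ioo (u i) (v i))) :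
    ∑ i ∈ I, (v i - u i) ≤ T := by
  have hvol := volume_le_of_injOn_coe hT (I.measurableSet_biUnion fun i _ => measurableSet_Ioo) hinj
  rw [measure_biUnion_finset hdisj fun i _ => measurableSet_Ioo] at hvol
  simp only [Real.volume_Ioo] at hvol
  rwa [← ENNReal.ofReal_sum_of_nonneg fun i hi => sub_nonneg.2 (huv i hi),
    ENNReal.ofReal_le_ofReal_iff hT.le] at hvol

variable {F : ℝ → ℝ} {H : CircleDeg1Lift} {α x y : ℝ}

theorem semiconj_iterate_apply (hs : Function.Semiconj H F (· + α)) (n : ℕ) (x : ℝ) :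
    H (F^[n] x) = H x + n * α := by
  rw [(hs.iterate_right n).eq, add_right_iterate_apply, nsmul_eq_mul]

theorem abs_sub_mul_add_intCast_le (hs : Function.Semiconj H F (· + α)) {i j : ℕ} {u : ℝ} {k : ℤ}
    (hu : u ∈ Ioo (F^[i] x) (F^[i] y)) (huk : u + k ∈ Ioo (F^[j] x) (F^[j] y)) :
    |(j - i) * α - k| ≤ H y - H x := by
  have hxu := H.monotone hu.1.le
  have huy := H.monotone hu.2.le
  have hxv := H.monotone huk.1.le
  have hvy := H.monotone huk.2.le
  simp only [semiconj_iterate_apply hs, H.map_add_int] at hxu huy hxv hvy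
  rw [abs_le]
  constructor <;> linarith

theorem eq_of_coe_eq_of_mem_Ioo_iterate (hs : Function.Semiconj H F (· + α)) {n : ℕ}
    (hone : H y - H x < 1)
    (hgap : ∀ m, 0 < m → m < n → H y - H x < ‖m • (α : UnitAddCircle)‖) {i j : ℕ} (hi : i < n)
    (hj : j < n) {u v : ℝ} (hu : u ∈ Ioo (F^[i] x) (F^[i] y)) (hv : v ∈ Ioo (F^[j] x) (F^[j] y))
    (huv : (u : UnitAddCircle) = v) : i = j ∧ u = v := by
  wlog hij : i ≤ j generalizing i j u v
  · exact (this hj hi hv hu huv.symm (le_of_not_ge hij)).imp Eq.symm Eq.symm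
  obtain ⟨k, rfl⟩ := exists_eq_add_intCast_of_coe_eq huv
  have hdist := abs_sub_mul_add_intCast_le hs hu hv
  obtain rfl | hlt := hij.eq_or_lt
  · have hk : |(k : ℝ)| < 1 := by simpa using hdist.trans_lt hone
    have : k = 0 := Int.abs_lt_one_iff.1 (by exact_mod_cast hk)
    simp [this]
  · have hnorm : ‖(j - i) • (α : UnitAddCircle)‖ ≤ |(j - i) * α - k| := by
      rw [← AddCircle.coe_nsmul, nsmul_eq_mul, Nat.cast_sub hij]
      exact norm_coe_le_abs_sub_intCast _ _
    exact absurd (hnorm.trans hdist) (hgap (j - i) (by lia) (by lia)).not_ge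

theorem sum_iterate_sub_iterate_le_one (hF : Monotone F) (hs : Function.Semiconj H F (· + α))
    (hxy : x ≤ y) {n : ℕ} (hone : H y - H x < 1)
    (hgap : ∀ m, 0 < m → m < n → H y - H x < ‖m • (α : UnitAddCircle)‖) :
    ∑ i ∈ Finset.range n, (F^[i] y - F^[i] x) ≤ 1 := by
  refine sum_sub_le_of_injOn_coe one_pos (fun i _ => hF.iterate i hxy) ?_ ?_
  · refine fun i hi j hj hij => disjoint_left.2 fun t hti htj => hij ?_
    exact (eq_of_coe_eq_of_mem_Ioo_iterate hs hone hgap (Finset.mem_range.1 hi)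
      (Finset.mem_range.1 hj) hti htj rfl).1
  · intro u hu v hv huv
    obtain ⟨i, hi, hu⟩ := mem_iUnion₂.1 hu
    obtain ⟨j, hj, hv⟩ := mem_iUnion₂.1 hv
    exact (eq_of_coe_eq_of_mem_Ioo_iterate hs hone hgap (Finset.mem_range.1 hi)
      (Finset.mem_range.1 hj) hu hv huv).2

theorem tendsto_iterate_sub_iterate (hα : Irrational α) (hF : Monotone F)
    (hs : Function.Semiconj H F (· + α)) (hxy : x ≤ y) (hH : H x = H y) :
    Tendsto (fun n => F^[n] y - F^[n] x) atTop (nhds 0) := by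
  refine (summable_of_sum_range_le (c := 1) (fun n => sub_nonneg.2 (hF.iterate n hxy))
    fun n => ?_).tendsto_atTop_zero
  refine sum_iterate_sub_iterate_le_one hF hs hxy (by simp [hH]) fun m hm _ => ?_
  rw [hH, sub_self, norm_pos_iff]
  exact fun h0 => not_isOfFinAddOrder_coe hα (isOfFinAddOrder_iff_nsmul_eq_zero.2 ⟨m, hm, h0⟩)

theorem exists_forall_exists_abs_iterate_sub_lt (hα : Irrational α)
    (hs : Function.Semiconj H F (· + α)) {l : ℝ} (hl : 0 < l) :
    ∃ N : ℕ, ∀ x t : ℝ, ∃ j ≤ N, ∃ k : ℤ, |H (F^[j] x) - (t + k)| < l := by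
  obtain ⟨N, hN⟩ := exists_forall_exists_dist_nsmul_lt (denseRange_zsmul_coe hα) hl
  refine ⟨N, fun x t => ?_⟩
  obtain ⟨j, hj, hjt⟩ := hN ((t - H x : ℝ) : UnitAddCircle)
  refine ⟨j, hj, round (j * α - (t - H x)), ?_⟩
  rw [dist_eq_norm, ← AddCircle.coe_nsmul, ← AddCircle.coe_sub, UnitAddCircle.norm_eq,
    nsmul_eq_mul] at hjt
  rw [semiconj_iterate_apply hs]
  convert hjt using 2
  ring

theorem continuous_of_semiconj_add_irrational (hα : Irrational α)
    (hs : Function.Semiconj H F (· + α)) : Continuous H := by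
  refine H.monotone.continuous_of_denseRange (Metric.denseRange_iff.2 fun t l hl => ?_)
  obtain ⟨N, hN⟩ := exists_forall_exists_abs_iterate_sub_lt hα hs hl
  obtain ⟨j, -, k, hk⟩ := hN 0 t
  refine ⟨F^[j] 0 - k, ?_⟩
  rw [H.map_sub_int, dist_comm, Real.dist_eq]
  convert hk using 2
  ring

end DisjointIterates

section BirkhoffSums

theorem abs_birkhoffSum_le {X : Type*} {F : X → X} {φ : X → ℝ} {C : ℝ} (hC : ∀ x, |φ x| ≤ C)
    (n : ℕ) (x : X) : |birkhoffSum F φ n x| ≤ n * C := by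
  calc |birkhoffSum F φ n x| ≤ ∑ i ∈ Finset.range n, |φ (F^[i] x)| := Finset.abs_sum_le_sum_abs _ _
    _ ≤ ∑ _i ∈ Finset.range n, C := Finset.sum_le_sum fun i _ => hC _
    _ = n * C := by simp

theorem abs_birkhoffSum_iterate_sub_le {X : Type*} {F : X → X} {φ : X → ℝ} {C : ℝ}
    (hC : ∀ x, |φ x| ≤ C) (n j : ℕ) (x : X) :
    |birkhoffSum F φ n (F^[j] x) - birkhoffSum F φ n x| ≤ 2 * (j * C) := by
  have hcomm : birkhoffSum F φ n (F^[j] x) - birkhoffSum F φ n x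
      = birkhoffSum F φ j (F^[n] x) - birkhoffSum F φ j x := by
    have := birkhoffSum_add F φ j n x
    rw [add_comm j n, birkhoffSum_add] at this
    linarith
  rw [hcomm, two_mul]
  exact (abs_sub _ _).trans (add_le_add (abs_birkhoffSum_le hC j _) (abs_birkhoffSum_le hC j x))

theorem abs_birkhoffSum_sub_le_add_mul_sum {X : Type*} [PseudoMetricSpace X] {F : X → X}
    {φ : X → ℝ} {ε K : ℝ} (hφ : ∀ a b, dist (φ a) (φ b) ≤ ε + K * dist a b) (n : ℕ) (x y : X) :
    |birkhoffSum F φ n x - birkhoffSum F φ n y| ≤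
      n * ε + K * ∑ i ∈ Finset.range n, dist (F^[i] x) (F^[i] y) := by
  calc |birkhoffSum F φ n x - birkhoffSum F φ n y|
      ≤ ∑ i ∈ Finset.range n, dist (φ (F^[i] x)) (φ (F^[i] y)) :=
        dist_birkhoffSum_birkhoffSum_le F φ n x y
    _ ≤ ∑ i ∈ Finset.range n, (ε + K * dist (F^[i] x) (F^[i] y)) :=
        Finset.sum_le_sum fun i _ => hφ _ _
    _ = n * ε + K * ∑ i ∈ Finset.range n, dist (F^[i] x) (F^[i] y) := by
        simp [Finset.sum_add_distrib, Finset.mul_sum]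

theorem sum_birkhoffSum_apply_sub {X : Type*} (F : X → X) (φ : X → ℝ) (n : ℕ) (x : X) :
    ∑ i ∈ Finset.range n, birkhoffSum F φ i (F x) - ∑ i ∈ Finset.range n, birkhoffSum F φ i x
      = birkhoffSum F φ n x - n * φ x := by
  induction n with
  | zero => simp
  | succ n ih =>
    rw [Finset.sum_range_succ, Finset.sum_range_succ, birkhoffSum_succ' F φ n x]
    push_cast
    linarith

theorem continuous_birkhoffSum {X : Type*} [TopologicalSpace X] {F : X → X} {φ : X → ℝ}
    (hF : Continuous F) (hφ : Continuous φ) (n : ℕ) : Continuous (birkhoffSum F φ n) :=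
  continuous_finsetSum _ fun i _ => hφ.comp (hF.iterate i)

theorem periodic_birkhoffSum {φ : ℝ → ℝ} (F : CircleDeg1Lift) (hφ : Function.Periodic φ 1)
    (n : ℕ) : Function.Periodic (birkhoffSum F φ n) 1 := fun x => by
  refine Finset.sum_congr rfl fun i _ => ?_
  rw [← CircleDeg1Lift.coe_pow, CircleDeg1Lift.map_add_one, hφ]

variable {H : CircleDeg1Lift} {F φ : ℝ → ℝ} {α : ℝ}

theorem exists_block_abs_birkhoffSum_sub_le (hα : Irrational α) (hF : Monotone F)
    (hs : Function.Semiconj H F (· + α)) (hφ : UniformContinuous φ)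
    (hbdd : Bornology.IsBounded (range φ)) {ε : ℝ} (hε : 0 < ε) :
    ∃ M : ℕ, 0 < M ∧ ∃ l > 0, ∀ x y, |H x - H y| < l →
      |birkhoffSum F φ M x - birkhoffSum F φ M y| ≤ M * ε := by
  obtain ⟨K, hK, hφK⟩ := exists_dist_le_add_mul_dist hφ hbdd (half_pos hε)
  obtain ⟨M, hM⟩ := exists_nat_gt (K / (ε / 2))
  have hMK : K ≤ M * (ε / 2) := ((div_lt_iff₀ (half_pos hε)).1 hM).le
  obtain ⟨δ, hδ, hgap⟩ := exists_pos_le_norm_nsmul (not_isOfFinAddOrder_coe hα) M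
  refine ⟨M, Nat.cast_pos.1 ((by positivity : 0 ≤ K / (ε / 2)).trans_lt hM), min δ 1,
    lt_min hδ one_pos, fun x y hxy => ?_⟩
  wlog hle : x ≤ y generalizing x y
  · rw [abs_sub_comm]
    exact this y x (by rwa [abs_sub_comm]) (le_of_not_ge hle)
  have hHxy : H y - H x < min δ 1 := (neg_sub (H x) (H y) ▸ neg_le_abs _).trans_lt hxy
  have hsum := sum_iterate_sub_iterate_le_one hF hs hle
    (hHxy.trans_le (min_le_right _ _)) fun m hm hmM =>
      hHxy.trans_le ((min_le_left _ _).trans (hgap m hm hmM.le))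
  have hdist : ∀ i, dist (F^[i] x) (F^[i] y) = F^[i] y - F^[i] x := fun i => by
    rw [dist_comm, Real.dist_eq, abs_of_nonneg (sub_nonneg.2 (hF.iterate i hle))]
  calc |birkhoffSum F φ M x - birkhoffSum F φ M y|
      ≤ M * (ε / 2) + K * ∑ i ∈ Finset.range M, dist (F^[i] x) (F^[i] y) :=
        abs_birkhoffSum_sub_le_add_mul_sum hφK M x y
    _ ≤ M * (ε / 2) + K * 1 := by
        simp only [hdist]
        gcongr
    _ ≤ M * ε := by linarith

theorem abs_birkhoffSum_mul_sub_le (hs : Function.Semiconj H F (· + α)) {M : ℕ} {ε l : ℝ}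
    (hblock : ∀ x y, |H x - H y| < l → |birkhoffSum F φ M x - birkhoffSum F φ M y| ≤ M * ε)
    (B : ℕ) {x y : ℝ} (hxy : |H x - H y| < l) :
    |birkhoffSum F φ (M * B) x - birkhoffSum F φ (M * B) y| ≤ M * B * ε := by
  induction B with
  | zero => simp
  | succ B ih =>
    have hlast := hblock (F^[M * B] x) (F^[M * B] y) (by
      rwa [semiconj_iterate_apply hs, semiconj_iterate_apply hs, add_sub_add_right_eq_sub])
    rw [Nat.mul_succ, birkhoffSum_add, birkhoffSum_add, add_sub_add_comm]
    refine (abs_add_le _ _).trans ((add_le_add ih hlast).trans_eq ?_)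
    push_cast
    ring

theorem exists_forall_abs_birkhoffSum_sub_le {F : CircleDeg1Lift} (hα : Irrational α)
    (hs : Function.Semiconj H F (· + α)) (hφ : Continuous φ) (hper : Function.Periodic φ 1)
    {ε : ℝ} (hε : 0 < ε) :
    ∃ n : ℕ, 0 < n ∧ ∀ x y, |birkhoffSum F φ n x - birkhoffSum F φ n y| ≤ n * ε := by
  have hbdd := hper.isBounded_of_continuous one_ne_zero hφ
  obtain ⟨C, hC⟩ := hbdd.exists_norm_le
  replace hC : ∀ x, |φ x| ≤ C := fun x => hC _ (mem_range_self x)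
  obtain ⟨M, hM, l, hl, hblock⟩ := exists_block_abs_birkhoffSum_sub_le hα F.monotone hs
    (uniformContinuous_of_periodic hper one_pos hφ) hbdd (half_pos hε)
  obtain ⟨N, hN⟩ := exists_forall_exists_abs_iterate_sub_lt hα hs hl
  obtain ⟨B, hB⟩ := exists_nat_gt (2 * (N * C) / (ε / 2))
  have hC0 : 0 ≤ C := (abs_nonneg _).trans (hC 0)
  have hB0 : 0 < B := Nat.cast_pos.1 ((by positivity : 0 ≤ 2 * (N * C) / (ε / 2)).trans_lt hB)
  have hshift : 2 * (N * C) ≤ M * B * (ε / 2) := by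
    calc 2 * (N * C) ≤ B * (ε / 2) := ((div_lt_iff₀ (half_pos hε)).1 hB).le
      _ ≤ M * B * (ε / 2) := by
        gcongr
        exact le_mul_of_one_le_left B.cast_nonneg (by exact_mod_cast hM)
  refine ⟨M * B, Nat.mul_pos hM hB0, fun x y => ?_⟩
  obtain ⟨j, hjN, k, hjk⟩ := hN x (H y)
  set S := birkhoffSum F φ (M * B)
  have hblocks : |S (F^[j] x) - S y| ≤ M * B * (ε / 2) := by
    have hper_S : S (y + k) = S y := by
      simpa using (periodic_birkhoffSum F hper (M * B)).int_mul k y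
    rw [← hper_S]
    exact abs_birkhoffSum_mul_sub_le hs hblock B (by rwa [H.map_add_int])
  have hclose : |S x - S (F^[j] x)| ≤ 2 * (N * C) := by
    rw [abs_sub_comm]
    exact (abs_birkhoffSum_iterate_sub_le hC (M * B) j x).trans (by gcongr)
  calc |S x - S y| ≤ |S x - S (F^[j] x)| + |S (F^[j] x) - S y| := abs_sub_le _ _ _
    _ ≤ M * B * (ε / 2) + M * B * (ε / 2) := add_le_add (hclose.trans hshift) hblocks
    _ = (M * B : ℕ) * ε := by
      push_cast
      ring

end BirkhoffSums

section Steklov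

variable {u : ℝ → ℝ} {δ : ℝ}

/-- The mean of `u` over the interval `[x, x + δ]`, as a function of `x`: a regularization of `u`
one derivative smoother than `u`. -/
noncomputable def steklovAverage (u : ℝ → ℝ) (δ x : ℝ) : ℝ := (∫ t in x..(x + δ), u t) / δ

theorem hasDerivAt_steklovAverage (hu : Continuous u) (δ x : ℝ) :
    HasDerivAt (steklovAverage u δ) ((u (x + δ) - u x) / δ) x := by
  have hprim : ∀ y, HasDerivAt (fun z => ∫ t in (0 : ℝ)..z, u t) (u y) y := fun y =>
    (hu.integral_hasStrictDerivAt 0 y).hasDerivAt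
  have heq : steklovAverage u δ =
      fun x => ((∫ t in (0 : ℝ)..(x + δ), u t) - ∫ t in (0 : ℝ)..x, u t) / δ := funext fun y => by
    rw [intervalIntegral.integral_interval_sub_left (hu.intervalIntegrable _ _)
      (hu.intervalIntegrable _ _), steklovAverage]
  rw [heq]
  exact (((hprim (x + δ)).comp_add_const x δ).sub (hprim x)).div_const δ

theorem steklovAverage_add_one (hu : Continuous u) (hadd : ∀ x, u (x + 1) = u x + 1) (hδ : δ ≠ 0)
    (x : ℝ) : steklovAverage u δ (x + 1) = steklovAverage u δ x + 1 := by
  have hshift : ∫ t in (x + 1)..(x + 1 + δ), u t = (∫ t in x..(x + δ), u t) + δ := by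
    rw [add_right_comm, ← intervalIntegral.integral_comp_add_right]
    simp only [hadd]
    rw [intervalIntegral.integral_add (hu.intervalIntegrable _ _) intervalIntegrable_const,
      intervalIntegral.integral_const, add_sub_cancel_left, smul_eq_mul, mul_one]
  rw [steklovAverage, hshift, add_div, div_self hδ, steklovAverage]

theorem le_steklovAverage (hu : Monotone u) (hδ : 0 < δ) (x : ℝ) : u x ≤ steklovAverage u δ x := by
  have hle := intervalIntegral.integral_mono_on (μ := MeasureTheory.volume)
    (le_add_of_nonneg_right hδ.le) intervalIntegrable_const hu.intervalIntegrable
    fun t (ht : t ∈ Icc x (x + δ)) => hu ht.1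
  rw [intervalIntegral.integral_const, add_sub_cancel_left, smul_eq_mul] at hle
  rwa [steklovAverage, le_div_iff₀' hδ]

theorem steklovAverage_le (hu : Monotone u) (hδ : 0 < δ) (x : ℝ) :
    steklovAverage u δ x ≤ u (x + δ) := by
  have hle := intervalIntegral.integral_mono_on (μ := MeasureTheory.volume)
    (le_add_of_nonneg_right hδ.le) hu.intervalIntegrable intervalIntegrable_const
    fun t (ht : t ∈ Icc x (x + δ)) => hu ht.2
  rw [intervalIntegral.integral_const, add_sub_cancel_left, smul_eq_mul] at hle
  rwa [steklovAverage, div_le_iff₀' hδ]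

end Steklov

section TranslationNumber

theorem continuous_translationNumber {X : Type*} [TopologicalSpace X] {F : X → CircleDeg1Lift}
    (hF : Continuous fun p : X × ℝ => F p.1 p.2) : Continuous fun t => (F t).translationNumber := by
  have hpow : ∀ n : ℕ, Continuous fun t => (F t ^ n) 0 := fun n => by
    induction n with
    | zero => exact continuous_const
    | succ n ih =>
      simp only [pow_succ', CircleDeg1Lift.mul_apply]
      exact hF.comp (continuous_id.prodMk ih)
  have hunif : TendstoUniformly (fun (n : ℕ) t => (F t ^ n) 0 / n)
      (fun t => (F t).translationNumber) atTop := by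
    refine Metric.tendstoUniformly_iff.2 fun ε hε => ?_
    filter_upwards [tendsto_one_div_atTop_nhds_zero_nat.eventually_lt_const hε,
      eventually_gt_atTop 0] with n hn hpos t
    have hn0 : (0 : ℝ) < n := Nat.cast_pos.2 hpos
    refine lt_of_le_of_lt ?_ hn
    rw [le_div_iff₀ hn0, dist_comm, Real.dist_eq, ← abs_of_pos hn0, ← abs_mul, abs_of_pos hn0,
      sub_mul, div_mul_cancel₀ _ hn0.ne', mul_comm (CircleDeg1Lift.translationNumber _)]
    exact (F t).dist_pow_map_zero_mul_translationNumber_le n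
  exact hunif.continuous (Frequently.of_forall fun n => (hpow n).div_const _)

end TranslationNumber

namespace CircleDiffeo

instance : CoeFun CircleDiffeo fun _ => ℝ → ℝ := ⟨toFun⟩

section Basic

theorem hasDerivAt (f : CircleDiffeo) (x : ℝ) : HasDerivAt f (deriv f x) x :=
  (f.contDiff.differentiable one_ne_zero x).hasDerivAt

theorem continuous (f : CircleDiffeo) : Continuous f := f.contDiff.continuous

theorem continuous_deriv (f : CircleDiffeo) : Continuous (deriv f) :=
  f.contDiff.continuous_deriv_one

theorem strictMono (f : CircleDiffeo) : StrictMono f := strictMono_of_deriv_pos f.deriv_pos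

theorem periodic_deriv (f : CircleDiffeo) : Function.Periodic (deriv f) 1 := fun x => by
  rw [← deriv_comp_add_const, funext f.commute_translation, deriv_add_const]

theorem exists_mem_Ioo_deriv_eq_slope (f : CircleDiffeo) {x y : ℝ} (hxy : x < y) :
    ∃ ξ ∈ Ioo x y, deriv f ξ = (f y - f x) / (y - x) :=
  exists_hasDerivAt_eq_slope f _ hxy f.continuous.continuousOn fun ξ _ => f.hasDerivAt ξ

theorem exists_forall_abs_deriv_le (f : CircleDiffeo) : ∃ C, ∀ x, |deriv f x| ≤ C := by
  obtain ⟨C, hC⟩ :=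
    (f.periodic_deriv.isBounded_of_continuous one_ne_zero f.continuous_deriv).exists_norm_le
  exact ⟨C, fun x => hC _ (mem_range_self x)⟩

/-- The lift of a circle diffeomorphism as a `CircleDeg1Lift`, for which Mathlib develops the theory
of translation numbers. -/
def toCircleDeg1Lift (f : CircleDiffeo) : CircleDeg1Lift :=
  ⟨⟨f, f.strictMono.monotone⟩, f.commute_translation⟩

theorem coe_toCircleDeg1Lift (f : CircleDiffeo) : ⇑f.toCircleDeg1Lift = f := rfl

theorem uniformContinuous (f : CircleDiffeo) : UniformContinuous f :=
  uniformContinuous_circleDeg1Lift f.toCircleDeg1Lift f.continuous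

theorem uniformContinuous_deriv (f : CircleDiffeo) : UniformContinuous (deriv f) :=
  uniformContinuous_of_periodic f.periodic_deriv one_pos f.continuous_deriv

theorem surjective (f : CircleDiffeo) : Function.Surjective f :=
  f.toCircleDeg1Lift.continuous_iff_surjective.1 f.continuous

end Basic

section Constructions

/-- The circle diffeomorphism with lift `F` and derivative `F'`. -/
def ofHasDerivAt (F F' : ℝ → ℝ) (hF : ∀ x, HasDerivAt F (F' x) x) (hcont : Continuous F')
    (hpos : ∀ x, 0 < F' x) (hadd : ∀ x, F (x + 1) = F x + 1) : CircleDiffeo where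
  toFun := F
  contDiff := by
    have hderiv : deriv F = F' := funext fun x => (hF x).deriv
    exact contDiff_one_iff_deriv.2 ⟨fun x => (hF x).differentiableAt, hderiv ▸ hcont⟩
  deriv_pos x := (hF x).deriv ▸ hpos x
  commute_translation := hadd

/-- Composition of circle diffeomorphisms. -/
noncomputable def comp (f g : CircleDiffeo) : CircleDiffeo :=
  ofHasDerivAt (fun x => f (g x)) (fun x => deriv f (g x) * deriv g x)
    (fun x => (f.hasDerivAt _).comp x (g.hasDerivAt x))
    ((f.continuous_deriv.comp g.continuous).mul g.continuous_deriv)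
    (fun x => mul_pos (f.deriv_pos _) (g.deriv_pos x))
    (fun x => by rw [g.commute_translation, f.commute_translation])

theorem comp_apply (f g : CircleDiffeo) (x : ℝ) : f.comp g x = f (g x) := rfl

theorem deriv_comp_apply (f g : CircleDiffeo) (x : ℝ) :
    deriv (f.comp g) x = deriv f (g x) * deriv g x :=
  ((f.hasDerivAt _).comp x (g.hasDerivAt x)).deriv

/-- A circle diffeomorphism as an order isomorphism of the real line. -/
noncomputable def toOrderIso (f : CircleDiffeo) : ℝ ≃o ℝ :=
  f.strictMono.orderIsoOfSurjective f f.surjective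

theorem toOrderIso_symm_apply_apply (f : CircleDiffeo) (x : ℝ) : f.toOrderIso.symm (f x) = x :=
  f.toOrderIso.symm_apply_apply x

theorem apply_toOrderIso_symm_apply (f : CircleDiffeo) (x : ℝ) : f (f.toOrderIso.symm x) = x :=
  f.toOrderIso.apply_symm_apply x

/-- The inverse of a circle diffeomorphism. -/
noncomputable def symm (f : CircleDiffeo) : CircleDiffeo :=
  ofHasDerivAt f.toOrderIso.symm (fun x => (deriv f (f.toOrderIso.symm x))⁻¹)
    (fun x => HasDerivAt.of_local_left_inverse f.toOrderIso.symm.continuous.continuousAt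
      (f.hasDerivAt _) (f.deriv_pos _).ne' (Eventually.of_forall f.apply_toOrderIso_symm_apply))
    ((f.continuous_deriv.comp f.toOrderIso.symm.continuous).inv₀ fun x => (f.deriv_pos _).ne')
    (fun x => inv_pos.2 (f.deriv_pos _))
    (fun x => f.strictMono.injective (by
      simp only [f.apply_toOrderIso_symm_apply, f.commute_translation]))

theorem symm_apply_apply (f : CircleDiffeo) (x : ℝ) : f.symm (f x) = x :=
  f.toOrderIso_symm_apply_apply x

theorem apply_symm_apply (f : CircleDiffeo) (x : ℝ) : f (f.symm x) = x :=
  f.apply_toOrderIso_symm_apply x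

/-- The conjugate `h ∘ f ∘ h⁻¹`. -/
noncomputable def conj (h f : CircleDiffeo) : CircleDiffeo := (h.comp f).comp h.symm

theorem conj_apply_apply (h f : CircleDiffeo) (x : ℝ) : h.conj f (h x) = h (f x) :=
  congrArg (fun y => h (f y)) (h.symm_apply_apply x)

theorem deriv_conj_apply (h f : CircleDiffeo) (x : ℝ) :
    deriv (h.conj f) (h x) = deriv h (f x) * deriv f x / deriv h x := by
  rw [eq_div_iff (h.deriv_pos x).ne', ← deriv_comp_apply, ← deriv_comp_apply]
  congr 1
  exact funext (h.conj_apply_apply f)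

/-- The rigid translation `x ↦ x + α`. -/
def translation (α : ℝ) : CircleDiffeo :=
  ofHasDerivAt (fun x => x + α) (fun _ => 1) (fun x => (hasDerivAt_id x).add_const α)
    continuous_const (fun _ => one_pos) (fun x => add_right_comm x 1 α)

theorem translation_apply (α x : ℝ) : translation α x = x + α := rfl

theorem deriv_translation (α x : ℝ) : deriv (translation α) x = 1 :=
  ((hasDerivAt_id x).add_const α).deriv

theorem deriv_translation_comp (t : ℝ) (f : CircleDiffeo) (x : ℝ) :
    deriv ((translation t).comp f) x = deriv f x := by
  rw [deriv_comp_apply, deriv_translation, one_mul]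

end Constructions

section LogJacobian

/-- The logarithm of the derivative; it is an additive cocycle under composition. -/
noncomputable def logJacobian (f : CircleDiffeo) (x : ℝ) : ℝ := Real.log (deriv f x)

theorem exp_logJacobian (f : CircleDiffeo) (x : ℝ) : Real.exp (f.logJacobian x) = deriv f x :=
  Real.exp_log (f.deriv_pos x)

theorem continuous_logJacobian (f : CircleDiffeo) : Continuous f.logJacobian :=
  f.continuous_deriv.log fun x => (f.deriv_pos x).ne'

theorem periodic_logJacobian (f : CircleDiffeo) : Function.Periodic f.logJacobian 1 :=
  f.periodic_deriv.comp Real.log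

theorem logJacobian_conj_apply (h f : CircleDiffeo) (x : ℝ) :
    (h.conj f).logJacobian (h x) = h.logJacobian (f x) - h.logJacobian x + f.logJacobian x := by
  simp only [logJacobian]
  rw [deriv_conj_apply, Real.log_div (mul_pos (h.deriv_pos _) (f.deriv_pos _)).ne'
    (h.deriv_pos _).ne', Real.log_mul (h.deriv_pos _).ne' (f.deriv_pos _).ne']
  ring

theorem hasDerivAt_iterate (f : CircleDiffeo) (n : ℕ) (x : ℝ) :
    HasDerivAt f^[n] (Real.exp (birkhoffSum f f.logJacobian n x)) x := by
  induction n with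
  | zero => simpa using hasDerivAt_id x
  | succ n ih =>
    rw [Function.iterate_succ', birkhoffSum_succ, Real.exp_add, exp_logJacobian, mul_comm]
    exact (f.hasDerivAt _).comp x ih

theorem exists_birkhoffSum_logJacobian_eq_zero (f : CircleDiffeo) (n : ℕ) :
    ∃ x, birkhoffSum f f.logJacobian n x = 0 := by
  obtain ⟨x, -, hx⟩ := exists_hasDerivAt_eq_slope f^[n] _ one_pos
    (f.continuous.iterate n).continuousOn fun x _ => f.hasDerivAt_iterate n x
  have hone : f^[n] 1 = f^[n] 0 + 1 := by
    simpa [CircleDeg1Lift.coe_pow, coe_toCircleDeg1Lift] using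
      (f.toCircleDeg1Lift ^ n).map_add_one 0
  refine ⟨x, Real.exp_eq_one_iff _ |>.1 ?_⟩
  rw [hx, hone, add_sub_cancel_left, sub_zero, div_one]

theorem exists_logJacobian_eq_sub {v : ℝ → ℝ} (hv : Continuous v) (hper : Function.Periodic v 1) :
    ∃ (k : CircleDiffeo) (c : ℝ), ∀ x, k.logJacobian x = v x - c := by
  have hcont : Continuous fun t => Real.exp (v t) := Real.continuous_exp.comp hv
  have hint : ∀ a b, IntervalIntegrable (fun t => Real.exp (v t)) MeasureTheory.volume a b :=
    fun a b => hcont.intervalIntegrable a b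
  set I := ∫ t in (0 : ℝ)..1, Real.exp (v t)
  have hI : 0 < I :=
    intervalIntegral.intervalIntegral_pos_of_pos (hint 0 1) (fun t => Real.exp_pos _) one_pos
  have hderiv : ∀ x, HasDerivAt (fun x => (∫ t in (0 : ℝ)..x, Real.exp (v t)) / I)
      (Real.exp (v x) / I) x := fun x =>
    (hcont.integral_hasStrictDerivAt 0 x).hasDerivAt.div_const I
  have hperiod : ∀ x, ∫ t in x..(x + 1), Real.exp (v t) = I := fun x => by
    simpa using (hper.comp Real.exp).intervalIntegral_add_eq x 0
  refine ⟨ofHasDerivAt _ _ hderiv (hcont.div_const I) (fun x => div_pos (Real.exp_pos _) hI)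
    fun x => ?_, Real.log I, fun x => ?_⟩
  · rw [← intervalIntegral.integral_add_adjacent_intervals (hint 0 x) (hint x (x + 1)), hperiod,
      add_div, div_self hI.ne']
  · rw [logJacobian, ← Real.log_exp (v x), ← Real.log_div (Real.exp_pos _).ne' hI.ne']
    exact congrArg Real.log (hderiv x).deriv

end LogJacobian

variable {α ε : ℝ} {f g r : CircleDiffeo}

section RotationNumber

theorem hasRotationNumber_iff :
    hasRotationNumber f α ↔ f.toCircleDeg1Lift.translationNumber = α :=
  ⟨f.toCircleDeg1Lift.translationNumber_eq_of_tendsto₀, fun h => by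
    simpa [hasRotationNumber, ← h, CircleDeg1Lift.coe_pow, coe_toCircleDeg1Lift] using
      f.toCircleDeg1Lift.tendsto_translation_number₀⟩

theorem hasRotationNumber_conj (h : CircleDiffeo) (hf : hasRotationNumber f α) :
    hasRotationNumber (h.conj f) α := by
  rw [hasRotationNumber_iff] at hf ⊢
  rw [← hf]
  exact (CircleDeg1Lift.translationNumber_eq_of_semiconj (f := h.toCircleDeg1Lift)
    fun x => (h.conj_apply_apply f x).symm).symm

theorem exists_semiconj_add (hf : hasRotationNumber f α) :
    ∃ H : CircleDeg1Lift, Function.Semiconj H f (· + α) := by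
  let R : CircleDeg1Liftˣ := CircleDeg1Lift.translate (Multiplicative.ofAdd α)
  obtain ⟨H, hH⟩ := CircleDeg1Lift.semiconj_of_bijective_of_translationNumber_eq
    (f₁ := f.toCircleDeg1Lift) (f₂ := R) ⟨f.strictMono.injective, f.surjective⟩
    (CircleDeg1Lift.isUnit_iff_bijective.1 R.isUnit)
    (by rw [hasRotationNumber_iff.1 hf, CircleDeg1Lift.translationNumber_translate])
  refine ⟨H, fun x => (hH x).trans ?_⟩
  rw [CircleDeg1Lift.translate_apply, add_comm]

end RotationNumber

section C1Close

/-- `f` and `g` are uniformly `ε`-close together with their derivatives. -/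
def IsC1Close (ε : ℝ) (f g : CircleDiffeo) : Prop :=
  ∀ x, |f x - g x| ≤ ε ∧ |deriv f x - deriv g x| ≤ ε

theorem IsC1Close.trans {δ : ℝ} (hfg : IsC1Close ε f g) (hgr : IsC1Close δ g r) :
    IsC1Close (ε + δ) f r := fun x =>
  ⟨(abs_sub_le _ _ _).trans (add_le_add (hfg x).1 (hgr x).1),
    (abs_sub_le _ _ _).trans (add_le_add (hfg x).2 (hgr x).2)⟩

theorem IsC1Close.distC1_le (hfg : IsC1Close ε f g) : distC1 f g ≤ ε + ε := by
  have : Nonempty (Icc (0 : ℝ) 1) := ⟨⟨0, by simp⟩⟩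
  exact add_le_add (ciSup_le fun x => (hfg x).1) (ciSup_le fun x => (hfg x).2)

theorem exists_isC1Close_comp_left (h g : CircleDiffeo) (hε : 0 < ε) :
    ∃ δ > 0, ∀ f, IsC1Close δ f g → IsC1Close ε (h.comp f) (h.comp g) := by
  obtain ⟨C, hC⟩ := h.exists_forall_abs_deriv_le
  obtain ⟨D, hD⟩ := g.exists_forall_abs_deriv_le
  have hC0 : 0 ≤ C := (abs_nonneg _).trans (hC 0)
  have hD0 : 0 ≤ D := (abs_nonneg _).trans (hD 0)
  obtain ⟨δ₀, hδ₀, hclose₀⟩ := Metric.uniformContinuous_iff_le.1 h.uniformContinuous ε hε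
  obtain ⟨δ₁, hδ₁, hclose₁⟩ := Metric.uniformContinuous_iff_le.1 h.uniformContinuous_deriv
    (ε / 2 / (D + 1)) (by positivity)
  refine ⟨min (min δ₀ δ₁) (ε / 2 / (C + 1)), by positivity, fun f hfg x => ?_⟩
  have hfgx : |f x - g x| ≤ min δ₀ δ₁ := (hfg x).1.trans (min_le_left _ _)
  refine ⟨hclose₀ (hfgx.trans (min_le_left _ _)), ?_⟩
  have hderiv : |deriv h (f x) - deriv h (g x)| ≤ ε / 2 / (D + 1) :=
    hclose₁ (hfgx.trans (min_le_right _ _))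
  have hderiv' : |deriv f x - deriv g x| ≤ ε / 2 / (C + 1) := (hfg x).2.trans (min_le_right _ _)
  rw [deriv_comp_apply, deriv_comp_apply]
  calc |deriv h (f x) * deriv f x - deriv h (g x) * deriv g x|
      = |deriv h (f x) * (deriv f x - deriv g x)
          + (deriv h (f x) - deriv h (g x)) * deriv g x| := by ring_nf
    _ ≤ |deriv h (f x)| * |deriv f x - deriv g x|
          + |deriv h (f x) - deriv h (g x)| * |deriv g x| := by
        rw [← abs_mul, ← abs_mul]
        exact abs_add_le _ _
    _ ≤ (C + 1) * (ε / 2 / (C + 1)) + ε / 2 / (D + 1) * (D + 1) := by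
        gcongr
        exacts [(hC _).trans (by linarith), (hD x).trans (by linarith)]
    _ = ε := by
        field_simp
        ring

theorem exists_isC1Close_comp_right (k : CircleDiffeo) (hε : 0 < ε) :
    ∃ δ > 0, ∀ f g, IsC1Close δ f g → IsC1Close ε (f.comp k) (g.comp k) := by
  obtain ⟨C, hC⟩ := k.exists_forall_abs_deriv_le
  have hC0 : 0 ≤ C := (abs_nonneg _).trans (hC 0)
  refine ⟨ε / (C + 1), by positivity, fun f g hfg x => ⟨?_, ?_⟩⟩
  · exact (hfg (k x)).1.trans (div_le_self hε.le (by linarith))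
  · rw [deriv_comp_apply, deriv_comp_apply, ← sub_mul, abs_mul]
    calc |deriv f (k x) - deriv g (k x)| * |deriv k x|
        ≤ ε / (C + 1) * (C + 1) := by
          gcongr
          exacts [(hfg (k x)).2, (hC x).trans (by linarith)]
      _ = ε := div_mul_cancel₀ ε (by positivity)

theorem exists_isC1Close_conj (h g : CircleDiffeo) (hε : 0 < ε) :
    ∃ δ > 0, ∀ f, IsC1Close δ f g → IsC1Close ε (h.conj f) (h.conj g) := by
  obtain ⟨δ, hδ, hright⟩ := exists_isC1Close_comp_right h.symm hε
  obtain ⟨η, hη, hleft⟩ := exists_isC1Close_comp_left h g hδ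
  exact ⟨η, hη, fun f hfg => hright _ _ (hleft f hfg)⟩

end C1Close

section NearRotation

theorem isC1Close_translation (hr : hasRotationNumber r α) (hderiv : ∀ x, |deriv r x - 1| ≤ ε) :
    IsC1Close ε r (translation α) := by
  refine fun x => ⟨?_, by rw [deriv_translation]; exact hderiv x⟩
  obtain ⟨x₀, hx₀⟩ := r.toCircleDeg1Lift.exists_eq_add_translationNumber r.continuous
  rw [hasRotationNumber_iff.1 hr, coe_toCircleDeg1Lift] at hx₀
  have hper : Function.Periodic (fun x => r x - translation α x) 1 := fun x => by
    simp only [commute_translation, add_sub_add_right_eq_sub]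
  obtain ⟨z, hz, hxz⟩ := hper.exists_mem_Ico one_pos x x₀
  rw [hxz]
  have hmean : |(r z - z) - (r x₀ - x₀)| ≤ ε * |z - x₀| :=
    convex_univ.norm_image_sub_le_of_norm_hasDerivWithin_le
      (f := fun y => r y - y) (f' := fun y => deriv r y - 1)
      (fun y _ => ((r.hasDerivAt y).sub (hasDerivAt_id y)).hasDerivWithinAt)
      (fun y _ => hderiv y) (mem_univ x₀) (mem_univ z)
  have hε : 0 ≤ ε := (abs_nonneg _).trans (hderiv 0)
  have hzx : |z - x₀| ≤ 1 := by
    rw [abs_of_nonneg (sub_nonneg.2 hz.1)]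
    linarith [hz.2]
  calc |r z - translation α z| = |(r z - z) - (r x₀ - x₀)| := by
        rw [hx₀, translation_apply]
        congr 1
        ring
    _ ≤ ε * |z - x₀| := hmean
    _ ≤ ε := mul_le_of_le_one_right hε hzx

theorem exists_forall_abs_birkhoffSum_logJacobian_le (hα : Irrational α)
    (hf : hasRotationNumber f α) (hε : 0 < ε) :
    ∃ n : ℕ, 0 < n ∧ ∀ x, |birkhoffSum f f.logJacobian n x| ≤ n * ε := by
  obtain ⟨H, hH⟩ := exists_semiconj_add hf
  obtain ⟨n, hn, hclose⟩ := exists_forall_abs_birkhoffSum_sub_le (F := f.toCircleDeg1Lift) hα hH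
    f.continuous_logJacobian f.periodic_logJacobian hε
  obtain ⟨y, hy⟩ := f.exists_birkhoffSum_logJacobian_eq_zero n
  exact ⟨n, hn, fun x => by simpa [coe_toCircleDeg1Lift, hy] using hclose x y⟩

theorem exists_forall_abs_logJacobian_conj_le (hα : Irrational α) (hf : hasRotationNumber f α)
    (hε : 0 < ε) : ∃ k : CircleDiffeo, ∀ x, |(k.conj f).logJacobian x| ≤ ε := by
  obtain ⟨n, hn, hsub⟩ := exists_forall_abs_birkhoffSum_logJacobian_le hα hf hε
  have hn0 : (0 : ℝ) < n := Nat.cast_pos.2 hn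
  -- Averaging Birkhoff sums gives a transfer function making `log f'` cohomologous to its `n`-th
  -- Birkhoff average, which is uniformly small.
  set v : ℝ → ℝ := fun x => (∑ i ∈ Finset.range n, birkhoffSum f f.logJacobian i x) / n
  have hv : Continuous v := (continuous_finsetSum _ fun i _ =>
    continuous_birkhoffSum f.continuous f.continuous_logJacobian i).div_const _
  have hper : Function.Periodic v 1 := fun x => congrArg (· / (n : ℝ)) <| Finset.sum_congr rfl
    fun i _ => periodic_birkhoffSum f.toCircleDeg1Lift f.periodic_logJacobian i x
  obtain ⟨k, c, hk⟩ := exists_logJacobian_eq_sub hv hper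
  refine ⟨k, k.surjective.forall.2 fun x => ?_⟩
  have hcob : (k.conj f).logJacobian (k x) = birkhoffSum f f.logJacobian n x / n := by
    rw [logJacobian_conj_apply, hk, hk, sub_sub_sub_cancel_right, ← sub_div,
      sum_birkhoffSum_apply_sub]
    field_simp
    ring
  rw [hcob, abs_div, abs_of_pos hn0, div_le_iff₀' hn0]
  exact hsub x

theorem exists_isC1Close_conj_translation (hα : Irrational α) (hf : hasRotationNumber f α)
    (hε : 0 < ε) : ∃ k : CircleDiffeo, IsC1Close ε (k.conj f) (translation α) := by
  obtain ⟨k, hk⟩ := exists_forall_abs_logJacobian_conj_le hα hf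
    (lt_min one_pos (half_pos hε) : 0 < min 1 (ε / 2))
  refine ⟨k, isC1Close_translation (hasRotationNumber_conj k hf) fun x => ?_⟩
  rw [← exp_logJacobian]
  have hexp := Real.abs_exp_sub_one_le ((hk x).trans (min_le_left _ _))
  linarith [(hk x).trans (min_le_right _ _)]

end NearRotation

section Denjoy

variable {H : CircleDeg1Lift} {L : NNReal} {a b : ℝ}

theorem exists_iterate_sub_eq_exp_birkhoffSum_mul (g : CircleDiffeo) (n : ℕ) (hab : a < b) :
    ∃ ξ ∈ Ioo a b, g^[n] b - g^[n] a = Real.exp (birkhoffSum g g.logJacobian n ξ) * (b - a) := by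
  obtain ⟨ξ, hξ, hslope⟩ := exists_hasDerivAt_eq_slope g^[n] _ hab
    (g.continuous.iterate n).continuousOn fun x _ => g.hasDerivAt_iterate n x
  exact ⟨ξ, hξ, by rw [hslope, div_mul_cancel₀ _ (sub_pos.2 hab).ne']⟩

theorem abs_birkhoffSum_logJacobian_sub_le (hL : LipschitzWith L g.logJacobian) (n : ℕ)
    {x y ξ η : ℝ} (hξ : ξ ∈ Icc x y) (hη : η ∈ Icc x y) :
    |birkhoffSum g g.logJacobian n ξ - birkhoffSum g g.logJacobian n η| ≤
      L * ∑ i ∈ Finset.range n, (g^[i] y - g^[i] x) := by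
  have hmono : ∀ i, Monotone g^[i] := fun i => g.strictMono.monotone.iterate i
  calc |birkhoffSum g g.logJacobian n ξ - birkhoffSum g g.logJacobian n η|
      ≤ n * 0 + L * ∑ i ∈ Finset.range n, dist (g^[i] ξ) (g^[i] η) :=
        abs_birkhoffSum_sub_le_add_mul_sum (fun s t => by simpa using hL.dist_le_mul s t) n ξ η
    _ = L * ∑ i ∈ Finset.range n, dist (g^[i] ξ) (g^[i] η) := by rw [mul_zero, zero_add]
    _ ≤ L * ∑ i ∈ Finset.range n, (g^[i] y - g^[i] x) := by
        gcongr with i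
        exact Real.dist_le_of_mem_Icc ⟨hmono i hξ.1, hmono i hξ.2⟩ ⟨hmono i hη.1, hmono i hη.2⟩

theorem semiconj_symm_add_neg (hs : Function.Semiconj H g (· + α)) :
    Function.Semiconj H g.symm (· + -α) := fun x => by
  have h := hs (g.symm x)
  rw [apply_symm_apply] at h
  rw [h]
  exact (add_neg_cancel_right _ α).symm

theorem iterate_symm_iterate_apply_add_int (g : CircleDiffeo) (n : ℕ) (x : ℝ) (p : ℤ) :
    g^[n] (g.symm^[n] x + p) = x + p := by
  have hp := (g.toCircleDeg1Lift ^ n).map_add_int (g.symm^[n] x) p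
  rw [CircleDeg1Lift.coe_pow, coe_toCircleDeg1Lift] at hp
  rw [hp, Function.LeftInverse.iterate g.apply_symm_apply n x]

theorem exists_sum_iterate_sub_iterate_le_one_of_closest_return
    (hs : Function.Semiconj H g (· + α)) (hab : a ≤ b) (hH : H a = H b) {n : ℕ}
    (hn : ∀ m, 0 < m → m < n → ‖n • (α : UnitAddCircle)‖ < ‖m • (α : UnitAddCircle)‖) :
    ∃ p : ℤ, ∑ i ∈ Finset.range n, (g^[i] (max b (g.symm^[n] b + p)) -
      g^[i] (min a (g.symm^[n] a + p))) ≤ 1 := by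
  set p := round (n * α)
  have hnorm : ‖n • (α : UnitAddCircle)‖ = |n * α - p| := by
    rw [← AddCircle.coe_nsmul, UnitAddCircle.norm_eq, nsmul_eq_mul]
  have hHn : ∀ x, H (g.symm^[n] x + p) = H x - (n * α - p) := fun x => by
    rw [H.map_add_int, semiconj_iterate_apply (semiconj_symm_add_neg hs)]
    ring
  have hHxy : H (max b (g.symm^[n] b + p)) - H (min a (g.symm^[n] a + p)) =
      ‖n • (α : UnitAddCircle)‖ := by
    rw [H.monotone.map_max, H.monotone.map_min, hHn, hHn, hH, max_sub_min_eq_abs,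
      sub_sub_cancel_left, abs_neg, hnorm]
  refine ⟨p, sum_iterate_sub_iterate_le_one g.strictMono.monotone hs
    ((min_le_left _ _).trans (hab.trans (le_max_left _ _))) ?_ (by rwa [hHxy])⟩
  rw [hHxy, hnorm]
  exact (abs_sub_round _).trans_lt (by norm_num)

/- Up to an integer, `(a, b)` and its `n`-th preimage lie in one interval whose first `n` iterates
have total length at most `1`, so `g^[n]` has distortion at most `exp L` there. -/
theorem exp_neg_mul_sq_le_of_closest_return (hL : LipschitzWith L g.logJacobian)
    (hs : Function.Semiconj H g (· + α)) (hab : a < b) (hH : H a = H b) {n : ℕ}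
    (hn : ∀ m, 0 < m → m < n → ‖n • (α : UnitAddCircle)‖ < ‖m • (α : UnitAddCircle)‖) :
    Real.exp (-L) * (b - a) ^ 2 ≤ (g^[n] b - g^[n] a) * (g.symm^[n] b - g.symm^[n] a) := by
  obtain ⟨p, hsum⟩ := exists_sum_iterate_sub_iterate_le_one_of_closest_return hs hab.le hH hn
  have hAB : g.symm^[n] a + p < g.symm^[n] b + p :=
    add_lt_add_left (g.symm.strictMono.iterate n hab) _
  obtain ⟨ξ, hξ, hξn⟩ := g.exists_iterate_sub_eq_exp_birkhoffSum_mul n hab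
  obtain ⟨η, hη, hηn⟩ := g.exists_iterate_sub_eq_exp_birkhoffSum_mul n hAB
  rw [iterate_symm_iterate_apply_add_int, iterate_symm_iterate_apply_add_int,
    add_sub_add_right_eq_sub, add_sub_add_right_eq_sub] at hηn
  set S := birkhoffSum g g.logJacobian n
  have hdist : |S η - S ξ| ≤ L :=
    (abs_birkhoffSum_logJacobian_sub_le hL n
      ⟨(min_le_right _ _).trans hη.1.le, hη.2.le.trans (le_max_right _ _)⟩
      ⟨(min_le_left _ _).trans hξ.1.le, hξ.2.le.trans (le_max_left _ _)⟩).trans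
      (mul_le_of_le_one_right L.coe_nonneg hsum)
  calc Real.exp (-L) * (b - a) ^ 2 ≤ Real.exp (S ξ - S η) * (b - a) ^ 2 := by
        gcongr
        linarith [(abs_le.1 hdist).2]
    _ = Real.exp (S ξ) * (b - a) * (Real.exp (-S η) * (b - a)) := by
        rw [sub_eq_add_neg, Real.exp_add]
        ring
    _ = (g^[n] b - g^[n] a) * (g.symm^[n] b - g.symm^[n] a) := by
        rw [hξn, hηn, ← mul_assoc (Real.exp (-S η)), ← Real.exp_add, neg_add_cancel, Real.exp_zero,
          one_mul]

theorem strictMono_of_semiconj_add_irrational (hα : Irrational α)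
    (hL : LipschitzWith L g.logJacobian) (hs : Function.Semiconj H g (· + α)) : StrictMono H := by
  refine fun a b hab => (H.monotone hab.le).lt_of_ne fun hH => ?_
  have hlengths : Tendsto (fun n => (g^[n] b - g^[n] a) * (g.symm^[n] b - g.symm^[n] a)) atTop
      (nhds 0) := by
    simpa using (tendsto_iterate_sub_iterate hα g.strictMono.monotone hs hab.le hH).mul
      (tendsto_iterate_sub_iterate hα.neg g.symm.strictMono.monotone (semiconj_symm_add_neg hs)
        hab.le hH)
  have hpos : 0 < Real.exp (-L) * (b - a) ^ 2 :=
    mul_pos (Real.exp_pos _) (pow_pos (sub_pos.2 hab) 2)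
  obtain ⟨n, hn, hlt⟩ := ((frequently_norm_nsmul_lt (not_isOfFinAddOrder_coe hα)).and_eventually
    (hlengths.eventually_lt_const hpos)).exists
  exact hlt.not_ge (exp_neg_mul_sq_le_of_closest_return hL hs hab hH hn)

theorem exists_semiconj_add_of_lipschitzWith_logJacobian (hα : Irrational α)
    (hg : hasRotationNumber g α) (hL : LipschitzWith L g.logJacobian) :
    ∃ h : CircleDeg1Lift, Continuous h ∧ StrictMono h ∧ Function.Semiconj h (· + α) g := by
  obtain ⟨H, hs⟩ := exists_semiconj_add hg
  have hmono := strictMono_of_semiconj_add_irrational hα hL hs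
  have hsurj := H.continuous_iff_surjective.1 (continuous_of_semiconj_add_irrational hα hs)
  obtain ⟨u, rfl⟩ := CircleDeg1Lift.isUnit_iff_bijective.2 ⟨hmono.injective, hsurj⟩
  refine ⟨↑u⁻¹, ?_, ?_, ?_⟩
  · exact (CircleDeg1Lift.toOrderIso u).symm.continuous
  · exact (CircleDeg1Lift.toOrderIso u).symm.strictMono
  · exact hs.inverse_left (CircleDeg1Lift.units_inv_apply_apply u)
      (CircleDeg1Lift.units_apply_inv_apply u)

end Denjoy

section Smoothing

variable {δ : ℝ}

/-- The circle diffeomorphism obtained by averaging the lift `u` of a circle homeomorphism over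
intervals of length `δ`. -/
noncomputable def smoothing {u : ℝ → ℝ} (hc : Continuous u) (hm : StrictMono u)
    (hadd : ∀ x, u (x + 1) = u x + 1) (hδ : 0 < δ) : CircleDiffeo :=
  ofHasDerivAt (steklovAverage u δ) (fun x => (u (x + δ) - u x) / δ)
    (hasDerivAt_steklovAverage hc δ) (((hc.comp (continuous_add_const δ)).sub hc).div_const δ)
    (fun _ => div_pos (sub_pos.2 (hm (lt_add_of_pos_right _ hδ))) hδ)
    (steklovAverage_add_one hc hadd hδ.ne')

variable {u : ℝ → ℝ} (hc : Continuous u) (hm : StrictMono u) (hadd : ∀ x, u (x + 1) = u x + 1)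
  (hδ : 0 < δ) (x : ℝ)

theorem deriv_smoothing : deriv (smoothing hc hm hadd hδ) x = (u (x + δ) - u x) / δ :=
  (hasDerivAt_steklovAverage hc δ x).deriv

theorem le_smoothing : u x ≤ smoothing hc hm hadd hδ x := le_steklovAverage hm.monotone hδ x

theorem smoothing_le : smoothing hc hm hadd hδ x ≤ u (x + δ) := steklovAverage_le hm.monotone hδ x

end Smoothing

section LipschitzApproximation

variable {δ : ℝ}

theorem exists_hasRotationNumber_translation_comp {U : CircleDiffeo}
    (hg : hasRotationNumber g α) (hε : 0 ≤ ε) (hlow : ∀ x, g x ≤ U x)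
    (hupp : ∀ x, U x ≤ g x + ε) :
    ∃ t ∈ Icc (-ε) 0, hasRotationNumber ((translation t).comp U) α := by
  let τ : ℝ → ℝ := fun t => ((translation t).comp U).toCircleDeg1Lift.translationNumber
  have hτ : Continuous τ :=
    continuous_translationNumber ((U.continuous.comp continuous_snd).add continuous_fst)
  rw [hasRotationNumber_iff] at hg
  have hlow' : τ (-ε) ≤ α := hg ▸ CircleDeg1Lift.translationNumber_mono fun x =>
    sub_le_iff_le_add.2 (hupp x)
  have hupp' : α ≤ τ 0 := hg ▸ CircleDeg1Lift.translationNumber_mono fun x =>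
    (hlow x).trans_eq (add_zero _).symm
  obtain ⟨t, ht, htα⟩ := intermediate_value_Icc (neg_nonpos.2 hε) hτ.continuousOn ⟨hlow', hupp'⟩
  exact ⟨t, ht, hasRotationNumber_iff.2 htα⟩

theorem exists_lipschitzWith_logJacobian_smoothing (g : CircleDiffeo) (hδ : 0 < δ) :
    ∃ L : NNReal, LipschitzWith L
      (smoothing g.continuous g.strictMono g.commute_translation hδ).logJacobian := by
  set U := smoothing g.continuous g.strictMono g.commute_translation hδ
  have hderiv : ∀ x, HasDerivAt (deriv U) ((deriv g (x + δ) - deriv g x) / δ) x := fun x => by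
    rw [funext (deriv_smoothing g.continuous g.strictMono g.commute_translation hδ)]
    exact (((g.hasDerivAt (x + δ)).comp_add_const x δ).sub (g.hasDerivAt x)).div_const δ
  refine exists_lipschitzWith_of_periodic_deriv
    (fun x => (hderiv x).log (U.deriv_pos x).ne') ?_ (fun x => ?_) one_ne_zero
  · exact (((g.continuous_deriv.comp (continuous_add_const δ)).sub
      g.continuous_deriv).div_const δ).div U.continuous_deriv fun x => (U.deriv_pos x).ne'
  · simp only [add_right_comm x 1 δ, g.periodic_deriv _, U.periodic_deriv _]

theorem abs_deriv_smoothing_sub_le (g : CircleDiffeo) (hδ : 0 < δ)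
    (hosc : ∀ x y, dist x y ≤ δ → dist (deriv g x) (deriv g y) ≤ ε) (x : ℝ) :
    |deriv (smoothing g.continuous g.strictMono g.commute_translation hδ) x - deriv g x| ≤ ε := by
  obtain ⟨ξ, hξ, hslope⟩ := g.exists_mem_Ioo_deriv_eq_slope (lt_add_of_pos_right x hδ)
  rw [add_sub_cancel_left] at hslope
  rw [deriv_smoothing, ← hslope]
  refine hosc ξ x ?_
  rw [Real.dist_eq, abs_of_pos (sub_pos.2 hξ.1)]
  linarith [hξ.2]

theorem exists_lipschitzWith_logJacobian_isC1Close (hg : hasRotationNumber g α) (hε : 0 < ε) :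
    ∃ G : CircleDiffeo, hasRotationNumber G α ∧ (∃ L : NNReal, LipschitzWith L G.logJacobian) ∧
      IsC1Close ε G g := by
  obtain ⟨δ₀, hδ₀, hclose₀⟩ := Metric.uniformContinuous_iff_le.1 g.uniformContinuous ε hε
  obtain ⟨δ₁, hδ₁, hclose₁⟩ := Metric.uniformContinuous_iff_le.1 g.uniformContinuous_deriv ε hε
  have hδ : 0 < min δ₀ δ₁ := lt_min hδ₀ hδ₁
  set δ := min δ₀ δ₁
  set U := smoothing g.continuous g.strictMono g.commute_translation hδ
  have hlow : ∀ x, g x ≤ U x := le_smoothing g.continuous g.strictMono g.commute_translation hδ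
  have hupp : ∀ x, U x ≤ g x + ε := fun x => by
    have hosc : |g (x + δ) - g x| ≤ ε := hclose₀ (by
      rw [Real.dist_eq, add_sub_cancel_left, abs_of_pos hδ]
      exact min_le_left _ _)
    have hle : U x ≤ g (x + δ) :=
      smoothing_le g.continuous g.strictMono g.commute_translation hδ x
    linarith [(abs_le.1 hosc).2]
  obtain ⟨t, ht, hGα⟩ := exists_hasRotationNumber_translation_comp hg hε.le hlow hupp
  refine ⟨(translation t).comp U, hGα, ?_, fun x => ⟨?_, ?_⟩⟩
  · have hlog : ((translation t).comp U).logJacobian = U.logJacobian := funext fun x =>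
      congrArg Real.log (deriv_translation_comp t U x)
    exact hlog ▸ g.exists_lipschitzWith_logJacobian_smoothing hδ
  · rw [comp_apply, translation_apply, abs_le]
    constructor <;> linarith [ht.1, ht.2, hlow x, hupp x]
  · rw [deriv_translation_comp]
    exact g.abs_deriv_smoothing_sub_le hδ
      (fun y z hyz => hclose₁ (hyz.trans (min_le_right _ _))) x

end LipschitzApproximation

section SmoothConjugacy

variable {h₀ : CircleDeg1Lift}

/- `h₀` need not be differentiable: the derivative of the smoothed conjugate of the translation is a
difference quotient of `g` over a short interval. -/
theorem exists_isC1Close_conj_translation_of_semiconj (hc : Continuous h₀) (hm : StrictMono h₀)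
    (hs : Function.Semiconj h₀ (· + α) g) (hε : 0 < ε) :
    ∃ h : CircleDiffeo, IsC1Close ε (h.conj (translation α)) g := by
  obtain ⟨η, hη, hderiv⟩ := Metric.uniformContinuous_iff_le.1 g.uniformContinuous_deriv ε hε
  obtain ⟨δ, hδ, hclose⟩ := Metric.uniformContinuous_iff_le.1
    (uniformContinuous_circleDeg1Lift h₀ hc) (min η ε) (lt_min hη hε)
  have hosc : ∀ y, h₀ (y + δ) - h₀ y ≤ min η ε := fun y =>
    (le_abs_self _).trans (hclose (by rw [Real.dist_eq, add_sub_cancel_left, abs_of_pos hδ]))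
  have hsδ : ∀ y, h₀ (y + α + δ) = g (h₀ (y + δ)) := fun y => by
    rw [add_right_comm]
    exact hs (y + δ)
  set h := smoothing hc hm h₀.map_add_one hδ with hh
  have hlow : ∀ y, h₀ y ≤ h y := le_smoothing hc hm h₀.map_add_one hδ
  have hupp : ∀ y, h y ≤ h₀ (y + δ) := smoothing_le hc hm h₀.map_add_one hδ
  refine ⟨h, h.surjective.forall.2 fun y => ⟨?_, ?_⟩⟩
  · have hlow' : h₀ (y + α) ≤ g (h y) := (hs y).trans_le (g.strictMono.monotone (hlow y))
    have hupp' : g (h y) ≤ h₀ (y + α + δ) :=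
      (g.strictMono.monotone (hupp y)).trans_eq (hsδ y).symm
    rw [conj_apply_apply, translation_apply, abs_le]
    constructor <;>
      linarith [hlow (y + α), hupp (y + α), hosc (y + α), min_le_right η ε]
  · obtain ⟨ξ, hξ, hslope⟩ := g.exists_mem_Ioo_deriv_eq_slope (hm (lt_add_of_pos_right y hδ))
    have hconj : deriv (h.conj (translation α)) (h y) = deriv g ξ := by
      rw [deriv_conj_apply, deriv_translation, mul_one, translation_apply, hh, deriv_smoothing,
        deriv_smoothing, div_div_div_cancel_right₀ hδ.ne', hsδ, hslope, ← hs y]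
    rw [hconj]
    refine hderiv ((Real.dist_le_of_mem_Icc (Ioo_subset_Icc_self hξ) ⟨hlow y, hupp y⟩).trans ?_)
    exact (hosc y).trans (min_le_left _ _)

end SmoothConjugacy

end CircleDiffeo

/-- **Theorem (Bonatti–Guelman).** For every irrational `α ∈ ℝ/ℤ` and every
`f ∈ F¹_α`, the `C¹`-conjugacy class of `f` is `C¹`-dense in `F¹_α` : for every
`g ∈ F¹_α` and every `ε > 0` there is a `C¹`-diffeomorphism `h` of `S¹` such that
the conjugate `h∘f∘h⁻¹` (the circle diffeomorphism `fh` with `fh ∘ h = h ∘ f`)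
is `ε`-`C¹`-close to `g`. -/
theorem conjugacy_class_dense (α : ℝ) (hα : Irrational α)
    (f g : CircleDiffeo) (hf : hasRotationNumber f α) (hg : hasRotationNumber g α)
    (ε : ℝ) (hε : 0 < ε) :
    ∃ h fh : CircleDiffeo, (∀ x : ℝ, fh.toFun (h.toFun x) = h.toFun (f.toFun x)) ∧
      distC1 fh.toFun g.toFun < ε := by
  have hε' : 0 < ε / 8 := by positivity
  obtain ⟨G, hG, ⟨L, hL⟩, hGg⟩ :=
    CircleDiffeo.exists_lipschitzWith_logJacobian_isC1Close hg hε'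
  obtain ⟨h₀, hcont, hmono, hsemi⟩ :=
    CircleDiffeo.exists_semiconj_add_of_lipschitzWith_logJacobian hα hG hL
  obtain ⟨h, hhG⟩ :=
    CircleDiffeo.exists_isC1Close_conj_translation_of_semiconj hcont hmono hsemi hε'
  obtain ⟨δ, hδ, hconj⟩ :=
    CircleDiffeo.exists_isC1Close_conj h (CircleDiffeo.translation α) hε'
  obtain ⟨k, hk⟩ := CircleDiffeo.exists_isC1Close_conj_translation hα hf hδ
  refine ⟨h.comp k, h.conj (k.conj f), fun x => ?_, ?_⟩
  · rw [CircleDiffeo.comp_apply, CircleDiffeo.comp_apply, CircleDiffeo.conj_apply_apply,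
      CircleDiffeo.conj_apply_apply]
  · have hclose := ((hconj _ hk).trans hhG).trans hGg
    exact hclose.distC1_le.trans_lt (by linarith)
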